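/- arXiv:2404.06388 — 8 statements merged into one kernel-verified Lean document; each statement's English description precedes it below -/
import Mathlib

section
/- A pair of matrices A, B in SL(2,ℂ) shares a common eigenvector (i.e., there exists a nonzero vector v ∈ ℂ² and scalars a, b ∈ ℂ with Av = a·v and Bv = b·v) if and only if tr(ABA⁻¹B⁻¹) = 2. -/
open Matrix

/-- The trace of an element of `SL(2, ℂ)`, viewed as a matrix. -/
noncomputable def tr (A : Matrix.SpecialLinearGroup (Fin 2) ℂ) : ℂ :=
  Matrix.trace (A : Matrix (Fin 2) (Fin 2) ℂ)

/-- Two elements of `SL(2, ℂ)` share a common eigenvector. -/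
def SharesEigenvector (A B : Matrix.SpecialLinearGroup (Fin 2) ℂ) : Prop :=
  ∃ v : Fin 2 → ℂ, v ≠ 0 ∧ ∃ a b : ℂ,
    (A : Matrix (Fin 2) (Fin 2) ℂ).mulVec v = a • v ∧
    (B : Matrix (Fin 2) (Fin 2) ℂ).mulVec v = b • v

/-!
Write `[A, B] = AB - BA` and `C = ABA⁻¹B⁻¹`. Then `[A, B] = (C - 1)BA`, and
`det (C - 1) = 2 - tr C` because `det C = 1`, so `tr C = 2` says that `[A, B]` is singular. A
common eigenvector is killed by `[A, B]`. Conversely, a singular `2 × 2` matrix has rank at most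
one, and two operators `f`, `g` on a nonzero finite-dimensional space over an algebraically closed
field whose commutator has rank at most one share an eigenvector. For this, let `a` be an
eigenvalue of `f` and `N = f - a`. If `N x = 0` but `[N, g] x = N (g x) ≠ 0`, then this vector
spans the range of `[N, g] = [f, g]`, which therefore lies in the range of `N`; so either the
kernel or the range of `N` is invariant under `g`. Unless `N = 0`, both are proper nonzero
subspaces invariant under `f`, and one argues by induction on the dimension.
-/

section Endomorphism

open Module

theorem ker_or_range_mem_invtSubmodule_of_rank_lie_le_one {D V : Type*} [DivisionRing D]
    [AddCommGroup V] [Module D V] {f g : End D V} (h : LinearMap.rank ⁅f, g⁆ ≤ 1) :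
    LinearMap.ker f ∈ g.invtSubmodule ∨ LinearMap.range f ∈ g.invtSubmodule := by
  have lie_apply (x : V) : ⁅f, g⁆ x = f (g x) - g (f x) := rfl
  refine or_iff_not_imp_left.mpr fun hker ↦ ?_
  obtain ⟨x, hfx, hfgx⟩ : ∃ x, f x = 0 ∧ f (g x) ≠ 0 := by
    simpa [End.mem_invtSubmodule_iff_forall_mem_of_mem] using hker
  have hlie : ⁅f, g⁆ x = f (g x) := by simp [lie_apply, hfx]
  have range_lie_le : LinearMap.range ⁅f, g⁆ ≤ LinearMap.range f := by
    obtain ⟨w, -, hw⟩ := (rank_submodule_le_one_iff _).mp h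
    obtain ⟨r, hr⟩ : ∃ r : D, r • w = f (g x) := Submodule.mem_span_singleton.mp (hw ⟨x, hlie⟩)
    have hr0 : r ≠ 0 := left_ne_zero_of_smul (hr ▸ hfgx)
    refine hw.trans ((Submodule.span_singleton_le_iff_mem _ _).mpr ?_)
    exact (Submodule.smul_mem_iff _ hr0).mp ⟨g x, hr.symm⟩
  rintro _ ⟨y, rfl⟩
  have hgf : g (f y) = f (g y) - ⁅f, g⁆ y := by rw [lie_apply]; abel
  rw [Submodule.mem_comap, hgf]
  exact sub_mem ⟨g y, rfl⟩ (range_lie_le ⟨y, rfl⟩)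

theorem rank_lie_restrict_le {R M : Type*} [Ring R] [AddCommGroup M]
    [Module R M] {f g : End R M} {p : Submodule R M}
    (hf : p ∈ f.invtSubmodule) (hg : p ∈ g.invtSubmodule) :
    LinearMap.rank ⁅(f.restrict hf : End R p), (g.restrict hg : End R p)⁆ ≤
      LinearMap.rank ⁅f, g⁆ := by
  set c : End R p := ⁅(f.restrict hf : End R p), (g.restrict hg : End R p)⁆
  have hc : p.subtype ∘ₗ c = ⁅f, g⁆ ∘ₗ p.subtype := rfl
  calc LinearMap.rank c = LinearMap.rank (p.subtype ∘ₗ c) := by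
        rw [LinearMap.rank, LinearMap.rank, LinearMap.range_comp]
        exact (Submodule.equivMapOfInjective _ p.injective_subtype _).rank_eq
    _ ≤ LinearMap.rank ⁅f, g⁆ := hc ▸ LinearMap.rank_comp_le_left _ _

variable {K V : Type*} [Field K] [AddCommGroup V] [Module K V]

theorem exists_ne_bot_ne_top_mem_invtSubmodule_of_rank_lie_le_one [FiniteDimensional K V]
    {f g : End K V} {a : K} (h : LinearMap.rank ⁅f, g⁆ ≤ 1) (ha : f.HasEigenvalue a)
    (hfa : f ≠ a • 1) :
    ∃ p ∈ f.invtSubmodule ⊓ g.invtSubmodule, p ≠ ⊥ ∧ p ≠ ⊤ := by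
  set N : End K V := f - a • 1 with hN
  have hN0 : N ≠ 0 := sub_ne_zero.mpr hfa
  have hker : LinearMap.ker N ≠ ⊥ := by rwa [hN, ← End.eigenspace_def, ← End.hasEigenvalue_iff]
  have hrange : LinearMap.range N ≠ ⊤ := mt LinearMap.ker_eq_bot_iff_range_eq_top.mpr hker
  have hcomm (x : V) : N (f x) = f (N x) := by simp [hN]
  have hlie : ⁅N, g⁆ = ⁅f, g⁆ := by simp [hN, Ring.lie_def, sub_mul, mul_sub]
  rcases ker_or_range_mem_invtSubmodule_of_rank_lie_le_one (hlie ▸ h) with hg | hg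
  · have hf : LinearMap.ker N ∈ f.invtSubmodule := fun x hx ↦ by
      rw [Submodule.mem_comap, LinearMap.mem_ker, hcomm, LinearMap.mem_ker.mp hx, map_zero]
    exact ⟨_, ⟨hf, hg⟩, hker, mt LinearMap.ker_eq_top.mp hN0⟩
  · have hf : LinearMap.range N ∈ f.invtSubmodule := by
      rintro _ ⟨x, rfl⟩
      exact ⟨f x, hcomm x⟩
    exact ⟨_, ⟨hf, hg⟩, mt LinearMap.range_eq_bot.mp hN0, hrange⟩

theorem exists_common_eigenvector_of_rank_lie_le_one [IsAlgClosed K] [FiniteDimensional K V]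
    [Nontrivial V] (f g : End K V) (h : LinearMap.rank ⁅f, g⁆ ≤ 1) :
    ∃ v ≠ 0, ∃ a b : K, f v = a • v ∧ g v = b • v := by
  induction hd : finrank K V using Nat.strong_induction_on generalizing V with
  | _ d ih =>
    obtain ⟨a, ha⟩ := End.exists_eigenvalue f
    by_cases hfa : f = a • 1
    · obtain ⟨b, hb⟩ := End.exists_eigenvalue g
      obtain ⟨v, hv⟩ := hb.exists_hasEigenvector
      exact ⟨v, hv.2, a, b, by simp [hfa], hv.apply_eq_smul⟩
    · obtain ⟨p, ⟨hpf, hpg⟩, hbot, htop⟩ :=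
        exists_ne_bot_ne_top_mem_invtSubmodule_of_rank_lie_le_one h ha hfa
      have : Nontrivial p := Submodule.nontrivial_iff_ne_bot.mpr hbot
      obtain ⟨v, hv, b, c, hb, hc⟩ := ih _ (hd ▸ Submodule.finrank_lt htop) (f.restrict hpf)
        (g.restrict hpg) ((rank_lie_restrict_le hpf hpg).trans h) rfl
      exact ⟨v, by simpa using hv, b, c, congrArg Subtype.val hb, congrArg Subtype.val hc⟩

end Endomorphism

section Matrix

variable {n R : Type*} [Fintype n] [DecidableEq n] [CommRing R]

theorem det_lie_eq_zero_of_mulVec_eq_smul [IsDomain R] {A B : Matrix n n R} {v : n → R}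
    (hv : v ≠ 0) {a b : R} (hA : A *ᵥ v = a • v) (hB : B *ᵥ v = b • v) : det ⁅A, B⁆ = 0 := by
  refine exists_mulVec_eq_zero_iff.mp ⟨v, hv, ?_⟩
  simp [Ring.lie_def, sub_mulVec, ← mulVec_mulVec, hA, hB, mulVec_smul, smul_comm a b]

theorem exists_common_eigenvector_fin_two_iff_det_lie_eq_zero {K : Type*} [Field K] [IsAlgClosed K]
    (A B : Matrix (Fin 2) (Fin 2) K) :
    (∃ v ≠ 0, ∃ a b : K, A *ᵥ v = a • v ∧ B *ᵥ v = b • v) ↔ det ⁅A, B⁆ = 0 := by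
  refine ⟨fun ⟨v, hv, a, b, hA, hB⟩ ↦ det_lie_eq_zero_of_mulVec_eq_smul hv hA hB, fun hdet ↦ ?_⟩
  have hlie : ⁅toLin' A, toLin' B⁆ = toLin' ⁅A, B⁆ := by
    simp [Ring.lie_def, toLin'_mul, Module.End.mul_eq_comp]
  refine exists_common_eigenvector_of_rank_lie_le_one (toLin' A) (toLin' B) ?_
  have hrange : LinearMap.range (toLin' ⁅A, B⁆) < ⊤ :=
    LinearMap.range_lt_top_of_det_eq_zero (by simpa using hdet)
  have hfinrank : Module.finrank K (LinearMap.range (toLin' ⁅A, B⁆)) < 2 := by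
    simpa using Submodule.finrank_lt hrange.ne
  rw [hlie, LinearMap.rank, ← Module.finrank_eq_rank]
  exact_mod_cast Nat.le_of_lt_succ hfinrank

theorem det_sub_one_fin_two (M : Matrix (Fin 2) (Fin 2) R) :
    det (M - 1) = det M - trace M + 1 := by
  simp only [det_fin_two, trace_fin_two, Matrix.sub_apply, one_apply_eq,
    one_apply_ne zero_ne_one, one_apply_ne one_ne_zero, sub_zero]
  ring

theorem trace_commutator_eq_two_sub_det_lie (A B : SpecialLinearGroup (Fin 2) R) :
    trace (A * B * A⁻¹ * B⁻¹).1 = 2 - det ⁅A.1, B.1⁆ := by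
  set C := A * B * A⁻¹ * B⁻¹ with hC
  have hCBA : C.1 * (B.1 * A.1) = A.1 * B.1 :=
    congrArg Subtype.val (show C * (B * A) = A * B by simp [hC, mul_assoc])
  have hlie : ⁅A.1, B.1⁆ = (C.1 - 1) * (B.1 * A.1) := by
    rw [sub_mul, hCBA, one_mul, Ring.lie_def]
  rw [hlie, det_mul, det_mul, det_sub_one_fin_two, A.2, B.2, C.2]
  ring

end Matrix

theorem sharesEigenvector_iff_trace_commutator_eq_two_general {K : Type*} [Field K]
    [IsAlgClosed K] (A B : SpecialLinearGroup (Fin 2) K) :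
    (∃ v ≠ 0, ∃ a b : K, A.1 *ᵥ v = a • v ∧ B.1 *ᵥ v = b • v) ↔
      trace (A * B * A⁻¹ * B⁻¹).1 = 2 := by
  rw [trace_commutator_eq_two_sub_det_lie, sub_eq_self,
    exists_common_eigenvector_fin_two_iff_det_lie_eq_zero]

/-- A pair `(A, B)` in `SL(2, ℂ)` shares a common eigenvector iff
`tr(ABA⁻¹B⁻¹) = 2`. -/
theorem sharesEigenvector_iff_trace_commutator_eq_two
    (A B : Matrix.SpecialLinearGroup (Fin 2) ℂ) :
    SharesEigenvector A B ↔ tr (A * B * A⁻¹ * B⁻¹) = 2 :=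
  sharesEigenvector_iff_trace_commutator_eq_two_general A B
end

section
/- Let A, B ∈ SL(2,ℂ) satisfy A²B² = I, and suppose the pair (A, B) is irreducible (A and B have no common eigenvector in ℂ²). Then tr(A) = 0 and tr(B) = 0. -/
open Matrix

/-!
By Cayley–Hamilton `tr M • M = M ^ 2 + det M • 1`, so whenever `M ^ 2` commutes with `N`, either
`tr M = 0` or `M` itself commutes with `N`. The relation `M ^ 2 * N ^ 2 = 1` makes `M ^ 2` and
`N ^ 2` mutually inverse, so each of them commutes with both `M` and `N`. Hence a nonzero trace
forces `M` and `N` to commute, and commuting endomorphisms over an algebraically closed field share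
an eigenvector.
-/

section TraceOfNoncommuting

variable {R : Type*} [CommRing R]

theorem trace_smul_self_eq_sq_add_det_smul_one (M : Matrix (Fin 2) (Fin 2) R) :
    M.trace • M = M ^ 2 + M.det • 1 := by
  nontriviality R
  rw [eq_comm, ← sub_eq_zero, add_sub_right_comm]
  simpa [charpoly_fin_two, Algebra.algebraMap_eq_smul_one] using M.aeval_self_charpoly

variable [IsDomain R] {M N : Matrix (Fin 2) (Fin 2) R}

theorem trace_eq_zero_of_commute_sq_of_not_commute (hsq : Commute (M ^ 2) N)
    (hMN : ¬ Commute M N) : M.trace = 0 := by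
  by_contra htr
  have hsmul : Commute (M.trace • M) N := by
    rw [trace_smul_self_eq_sq_add_det_smul_one]
    exact hsq.add_left ((Commute.one_left N).smul_left M.det)
  refine hMN (smul_right_injective _ htr ?_)
  simpa only [smul_mul_assoc, mul_smul_comm] using hsmul.eq

theorem irreducible_klein_traces_eq_zero_general (hrel : M ^ 2 * N ^ 2 = 1)
    (hMN : ¬ Commute M N) : M.trace = 0 ∧ N.trace = 0 := by
  have hrel' : N ^ 2 * M ^ 2 = 1 := mul_eq_one_comm.mp hrel
  have hM : Commute (M ^ 2) N :=
    (Commute.pow_self N 2).units_inv_left (u := ⟨N ^ 2, M ^ 2, hrel', hrel⟩)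
  have hN : Commute (N ^ 2) M :=
    (Commute.pow_self M 2).units_inv_left (u := ⟨M ^ 2, N ^ 2, hrel, hrel'⟩)
  exact ⟨trace_eq_zero_of_commute_sq_of_not_commute hM hMN,
    trace_eq_zero_of_commute_sq_of_not_commute hN (mt Commute.symm hMN)⟩

end TraceOfNoncommuting

section CommonEigenvector

variable {K V : Type*} [Field K] [IsAlgClosed K] [AddCommGroup V] [Module K V]
  [FiniteDimensional K V] [Nontrivial V]

theorem exists_common_eigenvector_of_commute {f g : Module.End K V} (h : Commute f g) :
    ∃ v : V, v ≠ 0 ∧ ∃ a b : K, f v = a • v ∧ g v = b • v := by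
  obtain ⟨a, ha⟩ := Module.End.exists_eigenvalue f
  have g_mapsTo : Set.MapsTo g (f.eigenspace a) (f.eigenspace a) :=
    Module.End.mapsTo_genEigenspace_of_comm h a 1
  have : Nontrivial (f.eigenspace a) := Submodule.nontrivial_iff_ne_bot.mpr ha
  obtain ⟨b, hb⟩ := Module.End.exists_eigenvalue (g.restrict g_mapsTo)
  obtain ⟨v, hv⟩ := hb.exists_hasEigenvector
  exact ⟨v, Subtype.coe_ne_coe.mpr hv.2, a, b, Module.End.mem_eigenspace_iff.mp v.2,
    congrArg Subtype.val hv.apply_eq_smul⟩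

end CommonEigenvector

theorem SharesEigenvector.of_commute {A B : Matrix.SpecialLinearGroup (Fin 2) ℂ}
    (h : Commute (A : Matrix (Fin 2) (Fin 2) ℂ) B) : SharesEigenvector A B :=
  exists_common_eigenvector_of_commute (h.map Matrix.toLinAlgEquiv')

/-- If `A²B² = I` in `SL(2, ℂ)` and the pair `(A, B)` is irreducible,
then `tr(A) = 0` and `tr(B) = 0`. -/
theorem irreducible_klein_traces_eq_zero
    (A B : Matrix.SpecialLinearGroup (Fin 2) ℂ)
    (hrel : A ^ 2 * B ^ 2 = 1) (hirr : ¬ SharesEigenvector A B) :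
    tr A = 0 ∧ tr B = 0 :=
  irreducible_klein_traces_eq_zero_general (congrArg Subtype.val hrel)
    (mt SharesEigenvector.of_commute hirr)
end

section
/- Let A, B ∈ SL(2,ℂ) satisfy A²B² = I, and suppose the pair (A, B) is irreducible (A and B have no common eigenvector in ℂ²). Then A² = −I and B² = −I. -/
open Matrix

/-!
Since `A² = B⁻²`, the matrix `A²` commutes with `B`. By Cayley–Hamilton `A² = tr(A) A - 1`, so
`tr(A) (AB - BA) = 0`. An irreducible pair does not commute, because commuting operators over `ℂ`
have a common eigenvector; hence `tr(A) = 0`, that is `A² = -1`. The relation is symmetric in `A`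
and `B`.
-/

theorem exists_hasEigenvector_of_commute {K V : Type*} [Field K] [IsAlgClosed K] [AddCommGroup V]
    [Module K V] [FiniteDimensional K V] [Nontrivial V] {f g : Module.End K V} (h : Commute f g) :
    ∃ (v : V) (a b : K), f.HasEigenvector a v ∧ g.HasEigenvector b v := by
  obtain ⟨a, ha⟩ := Module.End.exists_eigenvalue f
  have : Nontrivial (f.eigenspace a) := Submodule.nontrivial_iff_ne_bot.mpr ha
  have g_mapsTo : ∀ v ∈ f.eigenspace a, g v ∈ f.eigenspace a :=
    Module.End.mapsTo_genEigenspace_of_comm h a 1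
  obtain ⟨b, hb⟩ := Module.End.exists_eigenvalue (g.restrict g_mapsTo)
  obtain ⟨v, hv⟩ := hb.exists_hasEigenvector
  have v_ne_zero : (v : V) ≠ 0 := Subtype.coe_ne_coe.mpr hv.2
  have g_apply : g v = b • (v : V) := congrArg Subtype.val hv.apply_eq_smul
  exact ⟨v, a, b, ⟨v.2, v_ne_zero⟩, Module.End.mem_eigenspace_iff.mpr g_apply, v_ne_zero⟩

theorem sharesEigenvector_of_commute {A B : SpecialLinearGroup (Fin 2) ℂ} (h : Commute A B) :
    SharesEigenvector A B := by
  have h_toLin : Commute (toLin' (A : Matrix (Fin 2) (Fin 2) ℂ)) (toLin' B) :=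
    (h.map SpecialLinearGroup.coeMonoidHom).map toLinAlgEquiv'
  obtain ⟨v, a, b, hA, hB⟩ := exists_hasEigenvector_of_commute h_toLin
  exact ⟨v, hA.2, a, b, hA.apply_eq_smul, hB.apply_eq_smul⟩

section CardEqTwo

variable {n R : Type*} [Fintype n] [DecidableEq n] [CommRing R]

theorem sq_eq_trace_smul_sub_det_smul_one (hn : Fintype.card n = 2) (M : Matrix n n R) :
    M ^ 2 = M.trace • M - M.det • 1 := by
  nontriviality R
  have cayley_hamilton := M.aeval_self_charpoly
  simp only [M.charpoly_of_card_eq_two hn, map_add, map_sub, map_mul, map_pow, Polynomial.aeval_X,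
    Polynomial.aeval_C, Algebra.algebraMap_eq_smul_one, smul_one_mul] at cayley_hamilton
  rw [← sub_eq_zero, ← cayley_hamilton]
  abel

variable [IsDomain R]

theorem trace_eq_zero_of_commute_sq (hn : Fintype.card n = 2) {M N : Matrix n n R}
    (h_sq : Commute (M ^ 2) N) (h : ¬Commute M N) : M.trace = 0 := by
  have trace_smul : M.trace • M = M ^ 2 + M.det • 1 := by
    rw [sq_eq_trace_smul_sub_det_smul_one hn, sub_add_cancel]
  have h_smul : Commute (M.trace • M) N := by
    rw [trace_smul]
    exact h_sq.add_left ((Commute.one_left N).smul_left _)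
  by_contra trace_ne_zero
  refine h (smul_right_injective _ trace_ne_zero ?_)
  simpa only [smul_mul_assoc, mul_smul_comm] using h_smul.eq

theorem coe_sq_eq_neg_one_of_commute_sq (hn : Fintype.card n = 2) {A B : SpecialLinearGroup n R}
    (h_sq : Commute (A ^ 2) B) (h : ¬Commute A B) :
    ((A ^ 2 : SpecialLinearGroup n R) : Matrix n n R) = -1 := by
  have trace_eq_zero : (A : Matrix n n R).trace = 0 :=
    trace_eq_zero_of_commute_sq hn (h_sq.map SpecialLinearGroup.coeMonoidHom) fun h' ↦
      h (h'.of_map SpecialLinearGroup.coeMonoidHom_injective)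
  calc
    ((A ^ 2 : SpecialLinearGroup n R) : Matrix n n R) = (A : Matrix n n R) ^ 2 := A.coe_pow 2
    _ = -1 := by
      rw [sq_eq_trace_smul_sub_det_smul_one hn, trace_eq_zero, A.det_coe, zero_smul, one_smul,
        zero_sub]

end CardEqTwo

theorem commute_of_mul_pow_eq_one {G : Type*} [Group G] {a b : G} {k : ℕ} (h : a * b ^ k = 1) :
    Commute a b := by
  rw [eq_inv_of_mul_eq_one_left h]
  exact (Commute.pow_self b k).inv_left

theorem irreducible_klein_squares_eq_neg_one_general {n R : Type*} [Fintype n] [DecidableEq n]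
    [CommRing R] [IsDomain R] (hn : Fintype.card n = 2) {A B : SpecialLinearGroup n R}
    (hrel : A ^ 2 * B ^ 2 = 1) (hcomm : ¬Commute A B) :
    ((A ^ 2 : SpecialLinearGroup n R) : Matrix n n R) = -1 ∧
    ((B ^ 2 : SpecialLinearGroup n R) : Matrix n n R) = -1 :=
  ⟨coe_sq_eq_neg_one_of_commute_sq hn (commute_of_mul_pow_eq_one hrel) hcomm,
    coe_sq_eq_neg_one_of_commute_sq hn (commute_of_mul_pow_eq_one (mul_eq_one_comm.mp hrel))
      fun h ↦ hcomm h.symm⟩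

/-- If `A²B² = I` in `SL(2, ℂ)` and the pair `(A, B)` is irreducible,
then `A² = −I` and `B² = −I`. -/
theorem irreducible_klein_squares_eq_neg_one
    (A B : Matrix.SpecialLinearGroup (Fin 2) ℂ)
    (hrel : A ^ 2 * B ^ 2 = 1) (hirr : ¬ SharesEigenvector A B) :
    ((A ^ 2 : Matrix.SpecialLinearGroup (Fin 2) ℂ) : Matrix (Fin 2) (Fin 2) ℂ) = -1 ∧
    ((B ^ 2 : Matrix.SpecialLinearGroup (Fin 2) ℂ) : Matrix (Fin 2) (Fin 2) ℂ) = -1 :=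
  irreducible_klein_squares_eq_neg_one_general (Fintype.card_fin 2) hrel
    (mt sharesEigenvector_of_commute hirr)
end

section
/- Let A, B ∈ SL(2,ℂ) satisfy A²B² = I, and suppose the pair (A, B) is irreducible (A and B have no common eigenvector in ℂ²). Then there exist a sign ε ∈ {1, −1}, a complex number r with r ≠ 0 and r ≠ 4, and an invertible 2×2 complex matrix P, such that PAP⁻¹ equals the matrix with rows (εi, 1) and (0, −εi), and PBP⁻¹ equals the matrix with rows (εi, 0) and (r, −εi). Moreover, tr(AB) = r − 2. -/
open Matrix Complex

/-!
Since `A² = B⁻²`, the matrix `A²` commutes with `B`. By Cayley–Hamilton `A² = tr(A) A - 1`, so if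
`tr A ≠ 0` then `A` itself commutes with `B` and the pair is reducible; hence `tr A = 0` and, by
symmetry, `tr B = 0`. As `det B = 1`, `-i` is then an eigenvalue of `B`, with eigenvector `u` say.
In the basis `(A u + i u, u)` the second columns of `A` and `B` are `(1, -i)` and `(0, -i)`, and
traces and determinants determine everything else but the entry `r`. For `r = 0` and `r = 4` the
normal form has a common eigenvector, which irreducibility excludes.
-/

/-- Two square matrices have a common eigenvector, that is, for `2 × 2` matrices over a field, the
pair is reducible. This is `SharesEigenvector` for matrices of any size over any semiring. -/
def HasCommonEigenvector {n R : Type*} [Fintype n] [Semiring R] (A B : Matrix n n R) : Prop :=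
  ∃ v : n → R, v ≠ 0 ∧ ∃ a b : R, A *ᵥ v = a • v ∧ B *ᵥ v = b • v

lemma commute_sq_of_sq_mul_sq_eq_one {G : Type*} [Group G] {a b : G} (h : a ^ 2 * b ^ 2 = 1) :
    Commute (a ^ 2) b := by
  rw [eq_inv_of_mul_eq_one_left h]
  exact ((Commute.refl b).pow_left 2).inv_left

namespace HasCommonEigenvector

lemma symm {n R : Type*} [Fintype n] [Semiring R] {A B : Matrix n n R}
    (h : HasCommonEigenvector A B) : HasCommonEigenvector B A :=
  let ⟨v, hv, a, b, hA, hB⟩ := h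
  ⟨v, hv, b, a, hB, hA⟩

lemma of_units_conj {n R : Type*} [Fintype n] [DecidableEq n] [CommSemiring R]
    {A B : Matrix n n R} (P : (Matrix n n R)ˣ)
    (h : HasCommonEigenvector (P.val * A * P⁻¹.val) (P.val * B * P⁻¹.val)) :
    HasCommonEigenvector A B := by
  obtain ⟨v, hv, a, b, hA, hB⟩ := h
  have eigenvector_of_conj {M : Matrix n n R} {c : R} (hM : (P.val * M * P⁻¹.val) *ᵥ v = c • v) :
      M *ᵥ (P⁻¹.val *ᵥ v) = c • (P⁻¹.val *ᵥ v) := by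
    rw [← mulVec_smul, ← hM, mulVec_mulVec, mulVec_mulVec, mul_assoc, Units.inv_mul_cancel_left]
  refine ⟨P⁻¹.val *ᵥ v, fun h0 ↦ hv ?_, a, b, eigenvector_of_conj hA, eigenvector_of_conj hB⟩
  rw [← one_mulVec v, ← P.mul_inv, ← mulVec_mulVec, h0, mulVec_zero]

lemma of_commute {n K : Type*} [Fintype n] [Nonempty n] [Field K] [IsAlgClosed K]
    {A B : Matrix n n K} (h : Commute A B) : HasCommonEigenvector A B := by
  classical
  have hlin : Commute (toLin' A) (toLin' B) := h.map (toLinAlgEquiv' (R := K) (n := n))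
  obtain ⟨a, ha⟩ := Module.End.exists_eigenvalue (toLin' A)
  let E := Module.End.eigenspace (toLin' A) a
  have hE : Set.MapsTo (toLin' B) E E := Module.End.mapsTo_genEigenspace_of_comm hlin a 1
  have : Nontrivial E := (Submodule.nontrivial_iff_ne_bot).2 ha
  obtain ⟨b, hb⟩ := Module.End.exists_eigenvalue ((toLin' B).restrict hE)
  obtain ⟨⟨v, hvE⟩, hv⟩ := hb.exists_hasEigenvector
  refine ⟨v, fun h0 ↦ hv.2 (Subtype.ext h0), a, b, ?_, ?_⟩
  · exact Module.End.mem_eigenspace_iff.1 hvE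
  · exact congrArg Subtype.val hv.apply_eq_smul

end HasCommonEigenvector

lemma exists_ne_zero_mulVec_eq_smul_of_isRoot_charpoly {n R : Type*} [Fintype n] [DecidableEq n]
    [CommRing R] [IsDomain R] {M : Matrix n n R} {μ : R}
    (h : M.charpoly.IsRoot μ) : ∃ u ≠ 0, M *ᵥ u = μ • u := by
  rw [Polynomial.IsRoot, eval_charpoly] at h
  obtain ⟨u, hu, hMu⟩ := exists_mulVec_eq_zero_iff.2 h
  refine ⟨u, hu, ?_⟩
  rw [sub_mulVec, scalar_apply, ← smul_one_eq_diagonal, smul_mulVec, one_mulVec] at hMu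
  exact (sub_eq_zero.1 hMu).symm

lemma exists_units_mulVec_eq_single {n K : Type*} [Fintype n] [DecidableEq n] [Field K]
    {w : n → n → K} (hw : LinearIndependent K w) :
    ∃ P : (Matrix n n K)ˣ, ∀ j, P.val *ᵥ w j = Pi.single j 1 := by
  obtain ⟨Q, hQ⟩ : IsUnit (of w)ᵀ := linearIndependent_cols_iff_isUnit.1 hw
  refine ⟨Q⁻¹, fun j ↦ ?_⟩
  have hQj : Q.val *ᵥ Pi.single j 1 = w j := by
    rw [hQ, mulVec_single_one]
    rfl
  rw [← hQj, mulVec_mulVec, Q.inv_mul, one_mulVec]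

lemma linearIndependent_pair_of_not_hasCommonEigenvector {n K : Type*} [Fintype n] [Field K]
    {A B : Matrix n n K} (hirr : ¬ HasCommonEigenvector A B) {u : n → K} (hu : u ≠ 0) {b : K}
    (hBu : B *ᵥ u = b • u) (a : K) : LinearIndependent K ![A *ᵥ u - a • u, u] := by
  rw [LinearIndependent.pair_symm_iff, LinearIndependent.pair_iff' hu]
  intro c hc
  exact hirr ⟨u, hu, c + a, b, by rw [add_smul, hc, sub_add_cancel], hBu⟩

lemma sq_eq_trace_smul_sub_det_smul_one_s6 {R : Type*} [CommRing R]
    (A : Matrix (Fin 2) (Fin 2) R) : A ^ 2 = A.trace • A - A.det • 1 := by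
  nontriviality R
  have hCH := aeval_self_charpoly A
  simp only [charpoly_fin_two, map_add, map_sub, map_mul, map_pow, Polynomial.aeval_X,
    Polynomial.aeval_C, Algebra.algebraMap_eq_smul_one, smul_mul_assoc, one_mul] at hCH
  rw [← sub_eq_zero, ← hCH]
  abel

lemma eq_of_trace_eq_zero_of_mulVec_single {R : Type*} [Ring R]
    {M : Matrix (Fin 2) (Fin 2) R} {x y : R} (htr : M.trace = 0)
    (hM : M *ᵥ Pi.single 1 1 = ![x, y]) : M = !![-y, x; M 1 0, y] := by
  rw [mulVec_single_one] at hM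
  have h01 : M 0 1 = x := congrFun hM 0
  have h11 : M 1 1 = y := congrFun hM 1
  have h00 : M 0 0 = -y := by
    rw [trace_fin_two, h11] at htr
    exact eq_neg_of_add_eq_zero_left htr
  rw [← h00, ← h01, ← h11]
  exact eta_fin_two M

lemma hasCommonEigenvector_normalForm {R : Type*} [CommRing R] [Nontrivial R] {i r : R}
    (hi : i ^ 2 = -1) (hr : r = 0 ∨ r = 4) :
    HasCommonEigenvector !![i, 1; 0, -i] !![i, 0; r, -i] := by
  rcases hr with rfl | rfl
  · refine ⟨![1, 0], by simp, i, i, ?_, ?_⟩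
    · ext j
      fin_cases j <;> simp
    · ext j
      fin_cases j <;> simp
  · refine ⟨![1, -2 * i], by simp, -i, i, ?_, ?_⟩
    · ext j
      fin_cases j <;> simp <;> ring
    · ext j
      fin_cases j
      · simp
      · suffices 4 + 2 * i * i = -(i * (2 * i)) by simpa using this
        linear_combination 4 * hi

section FinTwo

variable {K : Type*} [Field K] {A B : Matrix (Fin 2) (Fin 2) K}

lemma trace_eq_zero_of_commute_sq_s6 [IsAlgClosed K] (h : Commute (A ^ 2) B)
    (hirr : ¬ HasCommonEigenvector A B) : A.trace = 0 := by
  by_contra htr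
  have hsmul : Commute (A.trace • A) B := by
    rw [← sub_add_cancel (A.trace • A) (A.det • 1), ← sq_eq_trace_smul_sub_det_smul_one_s6]
    exact h.add_left ((Commute.one_left B).smul_left A.det)
  exact hirr (.of_commute ((Commute.smul_left_iff₀ htr).1 hsmul))

lemma exists_units_conj_mulVec_single (hirr : ¬ HasCommonEigenvector A B) (a : K) {b : K}
    (hb : B.charpoly.IsRoot b) :
    ∃ P : (Matrix (Fin 2) (Fin 2) K)ˣ,
      (P.val * A * P⁻¹.val) *ᵥ Pi.single 1 1 = ![1, a] ∧
      (P.val * B * P⁻¹.val) *ᵥ Pi.single 1 1 = ![0, b] := by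
  obtain ⟨u, hu, hBu⟩ := exists_ne_zero_mulVec_eq_smul_of_isRoot_charpoly hb
  obtain ⟨P, hP⟩ := exists_units_mulVec_eq_single
    (linearIndependent_pair_of_not_hasCommonEigenvector hirr hu hBu a)
  have hPv : P.val *ᵥ (A *ᵥ u - a • u) = Pi.single 0 1 := hP 0
  have hPu : P.val *ᵥ u = Pi.single 1 1 := hP 1
  have conj_mulVec (M : Matrix (Fin 2) (Fin 2) K) :
      (P.val * M * P⁻¹.val) *ᵥ Pi.single 1 1 = P.val *ᵥ (M *ᵥ u) := by
    rw [← hPu, mulVec_mulVec, mulVec_mulVec, Units.inv_mul_cancel_right]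
  refine ⟨P, ?_, ?_⟩
  · rw [conj_mulVec, ← sub_add_cancel (A *ᵥ u) (a • u), mulVec_add, hPv, mulVec_smul, hPu]
    ext j
    fin_cases j <;> simp
  · rw [conj_mulVec, hBu, mulVec_smul, hPu]
    ext j
    fin_cases j <;> simp

lemma exists_conj_eq_normalForm (htrA : A.trace = 0) (htrB : B.trace = 0)
    (hdetA : A.det = 1) (hdetB : B.det = 1) (hirr : ¬ HasCommonEigenvector A B)
    {i : K} (hi : i ^ 2 = -1) :
    ∃ r : K, r ≠ 0 ∧ r ≠ 4 ∧
      (∃ P : Matrix (Fin 2) (Fin 2) K, IsUnit P ∧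
        P * A * P⁻¹ = !![i, 1; 0, -i] ∧ P * B * P⁻¹ = !![i, 0; r, -i]) ∧
      (A * B).trace = r - 2 := by
  have hroot : B.charpoly.IsRoot (-i) := by
    simp [charpoly_fin_two, htrB, hdetB, hi]
  obtain ⟨P, hPA, hPB⟩ := exists_units_conj_mulVec_single hirr (-i) hroot
  set r := (P.val * B * P⁻¹.val) 1 0
  have hB : P.val * B * P⁻¹.val = !![i, 0; r, -i] := by
    simpa only [neg_neg] using
      eq_of_trace_eq_zero_of_mulVec_single (by rw [trace_units_conj, htrB]) hPB
  have hA : P.val * A * P⁻¹.val = !![i, 1; 0, -i] := by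
    have hM := eq_of_trace_eq_zero_of_mulVec_single (by rw [trace_units_conj, htrA]) hPA
    have hlower : (P.val * A * P⁻¹.val) 1 0 = 0 := by
      have hdet := congrArg det hM
      rw [det_units_conj, hdetA, det_fin_two_of] at hdet
      linear_combination hdet - hi
    rwa [hlower, neg_neg] at hM
  have hr : ¬ (r = 0 ∨ r = 4) := fun hr ↦
    hirr (.of_units_conj P (by rw [hA, hB]; exact hasCommonEigenvector_normalForm hi hr))
  have htr : (A * B).trace = r - 2 := by
    have hconj : P.val * (A * B) * P⁻¹.val = !![i, 1; 0, -i] * !![i, 0; r, -i] := by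
      rw [← hA, ← hB]
      simp only [mul_assoc, Units.inv_mul_cancel_left]
    rw [← trace_units_conj P, hconj, mul_fin_two, trace_fin_two_of]
    linear_combination 2 * hi
  rw [coe_units_inv] at hA hB
  exact ⟨r, fun h ↦ hr (.inl h), fun h ↦ hr (.inr h), ⟨P, P.isUnit, hA, hB⟩, htr⟩

end FinTwo

theorem irreducible_klein_normal_form_general {K : Type*} [Field K] [IsAlgClosed K]
    {A B : Matrix.SpecialLinearGroup (Fin 2) K} (hrel : A ^ 2 * B ^ 2 = 1)
    (hirr : ¬ HasCommonEigenvector A.val B.val) {i : K} (hi : i ^ 2 = -1) :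
    ∃ r : K, r ≠ 0 ∧ r ≠ 4 ∧
      (∃ P : Matrix (Fin 2) (Fin 2) K, IsUnit P ∧
        P * A.val * P⁻¹ = !![i, 1; 0, -i] ∧ P * B.val * P⁻¹ = !![i, 0; r, -i]) ∧
      (A.val * B.val).trace = r - 2 := by
  have hrel' : B ^ 2 * A ^ 2 = 1 := mul_eq_one_comm.1 hrel
  have hAB : Commute (A.val ^ 2) B.val :=
    (commute_sq_of_sq_mul_sq_eq_one hrel).map Matrix.SpecialLinearGroup.coeMonoidHom
  have hBA : Commute (B.val ^ 2) A.val :=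
    (commute_sq_of_sq_mul_sq_eq_one hrel').map Matrix.SpecialLinearGroup.coeMonoidHom
  have htrA : A.val.trace = 0 := trace_eq_zero_of_commute_sq_s6 hAB hirr
  have htrB : B.val.trace = 0 := trace_eq_zero_of_commute_sq_s6 hBA fun h ↦ hirr h.symm
  exact exists_conj_eq_normalForm htrA htrB A.prop B.prop hirr hi

/-- Normal form for the irreducible representations of the Klein bottle group:
if `A²B² = I` and `(A, B)` is irreducible, then up to conjugation
`A = [[εi, 1], [0, −εi]]` and `B = [[εi, 0], [r, −εi]]` with `ε = ±1`,
`r ≠ 0`, `r ≠ 4`, and `tr(AB) = r − 2`. -/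
theorem irreducible_klein_normal_form
    (A B : Matrix.SpecialLinearGroup (Fin 2) ℂ)
    (hrel : A ^ 2 * B ^ 2 = 1) (hirr : ¬ SharesEigenvector A B) :
    ∃ ε : ℂ, (ε = 1 ∨ ε = -1) ∧ ∃ r : ℂ, r ≠ 0 ∧ r ≠ 4 ∧
      (∃ P : Matrix (Fin 2) (Fin 2) ℂ, IsUnit P ∧
        P * (A : Matrix (Fin 2) (Fin 2) ℂ) * P⁻¹ =
          !![ε * Complex.I, 1; 0, -(ε * Complex.I)] ∧
        P * (B : Matrix (Fin 2) (Fin 2) ℂ) * P⁻¹ =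
          !![ε * Complex.I, 0; r, -(ε * Complex.I)]) ∧
      tr (A * B) = r - 2 := by
  exact ⟨1, .inl rfl, by
    simpa only [one_mul, tr, Matrix.SpecialLinearGroup.coe_mul] using
      irreducible_klein_normal_form_general hrel hirr I_sq⟩
end

section
/- Let A, B ∈ SL(2,ℂ) satisfy A²B² = I. Then tr(A)·tr(B)·tr(AB) − tr(A)² − tr(B)² = 0. -/
open Matrix

/-!
Write `x = tr A`, `y = tr B`, `z = tr (A * B)`. In `SL(2, R)` the Cayley–Hamilton theorem reads
`A ^ 2 + 1 = x • A`, and `B⁻¹ = adjugate B` has trace `y`, so `A ^ 2 = B⁻¹ ^ 2` becomes the linear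
relation `x • A = y • B⁻¹`. Its trace is `x ^ 2 = y ^ 2`; multiplied by `B` it reads
`x • (A * B) = y • 1`, with trace `x * z = 2 * y`. Hence `x * y * z = 2 * y ^ 2 = x ^ 2 + y ^ 2`.
-/

section

variable {R : Type*} [CommRing R]

theorem eq_adjugate_of_mul_eq_one {n : Type*} [Fintype n] [DecidableEq n] {M N : Matrix n n R}
    (hN : N.det = 1) (h : M * N = 1) : M = adjugate N :=
  left_inv_eq_right_inv h (by rw [mul_adjugate, hN, one_smul])

theorem add_adjugate_fin_two (M : Matrix (Fin 2) (Fin 2) R) : M + adjugate M = M.trace • 1 := by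
  rw [adjugate_fin_two, trace_fin_two]
  ext i j
  fin_cases i <;> fin_cases j <;> simp [add_comm]

theorem trace_adjugate_fin_two (M : Matrix (Fin 2) (Fin 2) R) :
    (adjugate M).trace = M.trace := by
  rw [adjugate_fin_two, trace_fin_two_of, trace_fin_two, add_comm]

theorem det_adjugate_fin_two (M : Matrix (Fin 2) (Fin 2) R) : (adjugate M).det = M.det := by
  rw [det_adjugate, Fintype.card_fin, pow_one]

theorem sq_add_det_smul_one_fin_two (M : Matrix (Fin 2) (Fin 2) R) :
    M ^ 2 + M.det • 1 = M.trace • M :=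
  calc M ^ 2 + M.det • 1 = M * (M + adjugate M) := by rw [mul_add, mul_adjugate, sq]
    _ = M.trace • M := by rw [add_adjugate_fin_two, mul_smul_comm, mul_one]

variable {M N : Matrix (Fin 2) (Fin 2) R}

theorem trace_smul_eq_trace_smul_adjugate (hdet : M.det = N.det) (hsq : M ^ 2 = adjugate N ^ 2) :
    M.trace • M = N.trace • adjugate N := by
  rw [← sq_add_det_smul_one_fin_two, hsq, hdet, ← det_adjugate_fin_two N,
    sq_add_det_smul_one_fin_two, trace_adjugate_fin_two]

theorem trace_sq_eq_of_trace_smul_eq (h : M.trace • M = N.trace • adjugate N) :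
    M.trace ^ 2 = N.trace ^ 2 := by
  simpa only [trace_smul, trace_adjugate_fin_two, smul_eq_mul, ← sq] using congrArg trace h

theorem trace_mul_trace_mul_of_trace_smul_eq (h : M.trace • M = N.trace • adjugate N) :
    M.trace * (M * N).trace = 2 * (N.trace * N.det) := by
  have smul_mul_eq : M.trace • (M * N) = (N.trace * N.det) • 1 := by
    rw [← smul_mul_assoc, h, smul_mul_assoc, adjugate_mul, smul_smul]
  calc M.trace * (M * N).trace = (M.trace • (M * N)).trace := by rw [trace_smul, smul_eq_mul]
    _ = 2 * (N.trace * N.det) := by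
      rw [smul_mul_eq, trace_smul, trace_one, Fintype.card_fin, smul_eq_mul, mul_comm,
        Nat.cast_ofNat]

theorem klein_character_cubic_general (hM : M.det = 1) (hN : N.det = 1)
    (hrel : M ^ 2 * N ^ 2 = 1) :
    M.trace * N.trace * (M * N).trace - M.trace ^ 2 - N.trace ^ 2 = 0 := by
  have sq_eq : M ^ 2 = adjugate N ^ 2 := by
    rw [← adjugate_pow]
    exact eq_adjugate_of_mul_eq_one (by rw [det_pow, hN, one_pow]) hrel
  have smul_eq := trace_smul_eq_trace_smul_adjugate (hM.trans hN.symm) sq_eq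
  have trace_sq_eq : M.trace ^ 2 = N.trace ^ 2 := trace_sq_eq_of_trace_smul_eq smul_eq
  have trace_mul_eq : M.trace * (M * N).trace = 2 * N.trace := by
    rw [trace_mul_trace_mul_of_trace_smul_eq smul_eq, hN, mul_one]
  linear_combination N.trace * trace_mul_eq - trace_sq_eq

end

/-- Every character of the Klein bottle group `⟨s, t | s²t² = 1⟩` satisfies
the cubic `xyz − x² − y² = 0` in the coordinates `x = tr(s)`, `y = tr(t)`,
`z = tr(st)`. -/
theorem klein_character_cubic
    (A B : Matrix.SpecialLinearGroup (Fin 2) ℂ) (hrel : A ^ 2 * B ^ 2 = 1) :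
    tr A * tr B * tr (A * B) - tr A ^ 2 - tr B ^ 2 = 0 :=
  klein_character_cubic_general A.det_coe B.det_coe (congrArg Subtype.val hrel)
end

section
/- Let A, B ∈ SL(2,ℂ) satisfy A²B² = I, and suppose the pair (A, B) is reducible (A and B share a common eigenvector in ℂ²). Then either tr(B) = tr(A) and tr(AB) = 2, or tr(B) = −tr(A) and tr(AB) = −2. -/
open Matrix

/-!
A `2 × 2` matrix of determinant one with eigenvalue `μ` has trace `μ + μ⁻¹`. If `v ≠ 0`, `A v = a v`
and `B v = b v`, then `A² B² v = v` forces `ε = a b` to be `±1`. Hence `b = ε a⁻¹`, which gives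
`tr B = ε tr A`, and `A B` has the eigenvalue `ε = ε⁻¹`, which gives `tr (A B) = 2 ε`.
-/

section MulVec

variable {n R : Type*} [Fintype n] [CommSemiring R] {M N : Matrix n n R} {v : n → R} {μ ν : R}

theorem mul_mulVec_eq_mul_smul (hM : M *ᵥ v = μ • v) (hN : N *ᵥ v = ν • v) :
    (M * N) *ᵥ v = (μ * ν) • v := by
  rw [← mulVec_mulVec, hN, mulVec_smul, hM, smul_smul, mul_comm]

theorem pow_mulVec_eq_pow_smul [DecidableEq n] (hM : M *ᵥ v = μ • v) (k : ℕ) :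
    (M ^ k) *ᵥ v = μ ^ k • v := by
  induction k with
  | zero => simp
  | succ k ih => simpa only [pow_succ] using mul_mulVec_eq_mul_smul ih hM

end MulVec

section Eigenvalue

variable {R : Type*} [CommRing R] [IsDomain R]

section GeneralDimension

variable {n : Type*} [Fintype n] [DecidableEq n] {v : n → R}

theorem mul_sq_eq_one_of_sq_mul_sq_mulVec {A B : Matrix n n R} {a b : R} (hv : v ≠ 0)
    (hA : A *ᵥ v = a • v) (hB : B *ᵥ v = b • v) (hfix : (A ^ 2 * B ^ 2) *ᵥ v = v) :
    (a * b) ^ 2 = 1 := by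
  have heigen : (A ^ 2 * B ^ 2) *ᵥ v = (a ^ 2 * b ^ 2) • v :=
    mul_mulVec_eq_mul_smul (pow_mulVec_eq_pow_smul hA 2) (pow_mulVec_eq_pow_smul hB 2)
  apply smul_left_injective R hv
  simp only [mul_pow, one_smul, ← heigen, hfix]

theorem isRoot_charpoly_of_mulVec_eq_smul {M : Matrix n n R} {μ : R} (hv : v ≠ 0)
    (hM : M *ᵥ v = μ • v) : M.charpoly.IsRoot μ := by
  rw [Polynomial.IsRoot, eval_charpoly]
  refine exists_mulVec_eq_zero_iff.mp ⟨v, hv, ?_⟩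
  rw [sub_mulVec, hM, scalar_apply, diagonal_const_mulVec, sub_self]

end GeneralDimension

variable {A B M : SpecialLinearGroup (Fin 2) R} {v : Fin 2 → R} {a b μ : R}

theorem eigenvalue_mul_trace_eq_sq_add_one (hv : v ≠ 0) (hM : M.1 *ᵥ v = μ • v) :
    μ * M.1.trace = μ ^ 2 + 1 := by
  have hroot := isRoot_charpoly_of_mulVec_eq_smul hv hM
  simp only [charpoly_fin_two, M.det_coe, Polynomial.IsRoot, Polynomial.eval_add,
    Polynomial.eval_sub, Polynomial.eval_mul, Polynomial.eval_pow, Polynomial.eval_X,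
    Polynomial.eval_C] at hroot
  linear_combination -hroot

theorem trace_eq_two_mul_of_sq_eq_one (hv : v ≠ 0) (hM : M.1 *ᵥ v = μ • v) (hμ : μ ^ 2 = 1) :
    M.1.trace = 2 * μ := by
  linear_combination μ * eigenvalue_mul_trace_eq_sq_add_one hv hM - (M.1.trace - μ) * hμ

theorem trace_eq_mul_trace_of_mul_sq_eq_one (hv : v ≠ 0) (hA : A.1 *ᵥ v = a • v)
    (hB : B.1 *ᵥ v = b • v) (hab : (a * b) ^ 2 = 1) : B.1.trace = a * b * A.1.trace := by
  have hcharA := eigenvalue_mul_trace_eq_sq_add_one hv hA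
  have hcharB := eigenvalue_mul_trace_eq_sq_add_one hv hB
  linear_combination a ^ 2 * b * hcharB - b * hcharA - (B.1.trace - b) * hab

theorem reducible_klein_characters_general (hv : v ≠ 0) (hA : A.1 *ᵥ v = a • v)
    (hB : B.1 *ᵥ v = b • v) (hfix : (A ^ 2 * B ^ 2).1 *ᵥ v = v) :
    (B.1.trace = A.1.trace ∧ (A * B).1.trace = 2) ∨
      (B.1.trace = -A.1.trace ∧ (A * B).1.trace = -2) := by
  have hsq : (a * b) ^ 2 = 1 := mul_sq_eq_one_of_sq_mul_sq_mulVec hv hA hB hfix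
  have hB_trace : B.1.trace = a * b * A.1.trace :=
    trace_eq_mul_trace_of_mul_sq_eq_one hv hA hB hsq
  have hAB_trace : (A * B).1.trace = 2 * (a * b) :=
    trace_eq_two_mul_of_sq_eq_one hv (mul_mulVec_eq_mul_smul hA hB) hsq
  rcases sq_eq_one_iff.mp hsq with hab | hab
  · left
    rw [hB_trace, hAB_trace, hab, one_mul, mul_one]
    exact ⟨rfl, rfl⟩
  · right
    rw [hB_trace, hAB_trace, hab, neg_one_mul, mul_neg_one]
    exact ⟨rfl, rfl⟩

end Eigenvalue

/-- If `A²B² = I` in `SL(2, ℂ)` and the pair `(A, B)` is reducible, then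
either `tr(B) = tr(A)` and `tr(AB) = 2`, or `tr(B) = −tr(A)` and
`tr(AB) = −2`. -/
theorem reducible_klein_characters
    (A B : Matrix.SpecialLinearGroup (Fin 2) ℂ)
    (hrel : A ^ 2 * B ^ 2 = 1) (hred : SharesEigenvector A B) :
    (tr B = tr A ∧ tr (A * B) = 2) ∨ (tr B = -tr A ∧ tr (A * B) = -2) := by
  obtain ⟨v, hv, a, b, hA, hB⟩ := hred
  exact reducible_klein_characters_general hv hA hB (by simp [hrel])
end

section
/- Let A, B ∈ SL(2,ℂ) satisfy A²B² = I. If tr(AB) = 2 or tr(AB) = −2, then the pair (A, B) is reducible, i.e., A and B share a common eigenvector in ℂ². -/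
open Matrix

/-!
The relation `A²B² = 1` says exactly that `A` conjugates `U = AB` to `U⁻¹`. If `det U = 1` and
`tr U = 2ε` with `ε = ±1`, then `ε` is an eigenvalue of `U`; as `ε⁻¹ = ε`, the `ε`-eigenspaces of
`U` and `U⁻¹` coincide, so this eigenspace is stable under `A`. An eigenvector of `A` inside it is
also an eigenvector of `B = A⁻¹U`.
-/

theorem semiconjBy_mul_inv_of_sq_mul_sq_eq_one {G : Type*} [Group G] {a b : G}
    (h : a ^ 2 * b ^ 2 = 1) : SemiconjBy a (a * b) (a * b)⁻¹ :=
  calc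
    a * (a * b) = a ^ 2 * b ^ 2 * b⁻¹ := by
      rw [sq, sq, mul_assoc _ (b * b), mul_inv_cancel_right, mul_assoc]
    _ = b⁻¹ := by rw [h, one_mul]
    _ = (a * b)⁻¹ * a := by rw [_root_.mul_inv_rev, inv_mul_cancel_right]

section Eigenspace

open Module End

theorem mapsTo_eigenspace_of_semiconjBy {R M : Type*} [CommRing R] [AddCommGroup M] [Module R M]
    {f u w : End R M} (h : SemiconjBy f u w) (μ : R) :
    Set.MapsTo f (u.eigenspace μ) (w.eigenspace μ) := by
  intro x hx
  rw [SetLike.mem_coe, mem_eigenspace_iff] at hx ⊢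
  rw [← End.mul_apply, ← h.eq, End.mul_apply, hx, map_smul]

variable {K V : Type*} [Field K] [AddCommGroup V] [Module K V]

theorem eigenspace_inv_inv (u : V ≃ₗ[K] V) {μ : K} (hμ : μ ≠ 0) :
    eigenspace (u⁻¹ : V ≃ₗ[K] V).toLinearMap μ⁻¹ = eigenspace u.toLinearMap μ := by
  ext x
  simp only [mem_eigenspace_iff, LinearEquiv.coe_coe]
  calc
    u⁻¹ x = μ⁻¹ • x ↔ x = u (μ⁻¹ • x) := u.symm_apply_eq
    _ ↔ x = μ⁻¹ • u x := by rw [map_smul]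
    _ ↔ u x = μ • x := by rw [eq_inv_smul_iff₀ hμ, eq_comm]

variable [IsAlgClosed K] [FiniteDimensional K V]

theorem exists_mem_hasEigenvector_of_mapsTo {f : End K V} {p : Submodule K V} (hp : p ≠ ⊥)
    (hfp : Set.MapsTo f p p) : ∃ a, ∃ v ∈ p, f.HasEigenvector a v := by
  have : Nontrivial p := Submodule.nontrivial_iff_ne_bot.mpr hp
  obtain ⟨a, ha⟩ := exists_eigenvalue (f.restrict hfp)
  obtain ⟨v, hv⟩ := ha.exists_hasEigenvector
  have hfv : (v : V) ∈ f.eigenspace a :=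
    eigenspace_restrict_le_eigenspace f hfp a (Submodule.mem_map_of_mem hv.1)
  exact ⟨a, v, v.2, hfv, Submodule.coe_eq_zero.not.mpr hv.2⟩

theorem exists_common_hasEigenvector_of_sq_mul_sq_eq_one {f g : V ≃ₗ[K] V} {ε : K}
    (hfg : f ^ 2 * g ^ 2 = 1) (hε : ε ^ 2 = 1) (h : HasEigenvalue (f * g).toLinearMap ε) :
    ∃ v a b, HasEigenvector f.toLinearMap a v ∧ HasEigenvector g.toLinearMap b v := by
  have hε_inv : ε⁻¹ = ε := inv_eq_of_mul_eq_one_left (by rw [← sq, hε])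
  have hε_ne : ε ≠ 0 := by
    rintro rfl
    norm_num at hε
  have hsemiconj : SemiconjBy f.toLinearMap (f * g).toLinearMap (f * g)⁻¹.toLinearMap :=
    (semiconjBy_mul_inv_of_sq_mul_sq_eq_one hfg).map
      (LinearEquiv.automorphismGroup.toLinearMapMonoidHom (R := K) (M := V))
  have hinvariant : Set.MapsTo f.toLinearMap
      (eigenspace (f * g).toLinearMap ε) (eigenspace (f * g).toLinearMap ε) := by
    simpa only [← eigenspace_inv_inv (f * g) hε_ne, hε_inv] using
      mapsTo_eigenspace_of_semiconjBy hsemiconj ε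
  obtain ⟨a, v, hfgv, hfv⟩ := exists_mem_hasEigenvector_of_mapsTo h hinvariant
  have hfv_eq : f v = a • v := hfv.apply_eq_smul
  have ha : a ≠ 0 := by
    rintro rfl
    exact hfv.2 (f.map_eq_zero_iff.mp (by rw [hfv_eq, zero_smul]))
  have hgv : g v = (ε / a) • v := f.injective <|
    calc
      f (g v) = ε • v := mem_eigenspace_iff.mp hfgv
      _ = f ((ε / a) • v) := by rw [map_smul, hfv_eq, smul_smul, div_mul_cancel₀ ε ha]
  exact ⟨v, a, ε / a, hfv, mem_eigenspace_iff.mpr hgv, hfv.2⟩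

end Eigenspace

section SpecialLinearGroup

variable {K : Type*} [Field K]

theorem hasEigenvalue_toLin'_iff_trace_mul_eq (A : SpecialLinearGroup (Fin 2) K) (μ : K) :
    Module.End.HasEigenvalue (SpecialLinearGroup.toLin' A).toLinearMap μ ↔
      (A : Matrix (Fin 2) (Fin 2) K).trace * μ = μ ^ 2 + 1 := by
  rw [SpecialLinearGroup.toLin'_to_linearMap, Module.End.hasEigenvalue_iff_isRoot_charpoly,
    charpoly_toLin', charpoly_fin_two, A.det_coe]
  simp only [Polynomial.IsRoot.def, Polynomial.eval_add, Polynomial.eval_sub, Polynomial.eval_mul,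
    Polynomial.eval_pow, Polynomial.eval_X, Polynomial.eval_C]
  grind

theorem klein_trace_pm_two_reducible_general [IsAlgClosed K] (A B : SpecialLinearGroup (Fin 2) K)
    (hrel : A ^ 2 * B ^ 2 = 1)
    (htr : ((A * B : SpecialLinearGroup (Fin 2) K) : Matrix (Fin 2) (Fin 2) K).trace = 2 ∨
      ((A * B : SpecialLinearGroup (Fin 2) K) : Matrix (Fin 2) (Fin 2) K).trace = -2) :
    ∃ v : Fin 2 → K, v ≠ 0 ∧ ∃ a b : K,
      (A : Matrix (Fin 2) (Fin 2) K).mulVec v = a • v ∧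
      (B : Matrix (Fin 2) (Fin 2) K).mulVec v = b • v := by
  obtain ⟨ε, hε, htr_eq⟩ : ∃ ε : K, ε ^ 2 = 1 ∧
      ((A * B : SpecialLinearGroup (Fin 2) K) : Matrix (Fin 2) (Fin 2) K).trace = 2 * ε := by
    rcases htr with h | h
    · exact ⟨1, one_pow 2, by rw [h, mul_one]⟩
    · exact ⟨-1, neg_one_sq, by rw [h, mul_neg_one]⟩
  have heigen : Module.End.HasEigenvalue (SpecialLinearGroup.toLin' (A * B)).toLinearMap ε :=
    (hasEigenvalue_toLin'_iff_trace_mul_eq (A * B) ε).mpr (by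
      rw [htr_eq]
      linear_combination hε)
  rw [map_mul] at heigen
  obtain ⟨v, a, b, hA, hB⟩ := exists_common_hasEigenvector_of_sq_mul_sq_eq_one
    (by simp only [← map_pow, ← map_mul, hrel, map_one]) hε heigen
  exact ⟨v, hA.2, a, b, hA.apply_eq_smul, hB.apply_eq_smul⟩

end SpecialLinearGroup

/-- If `A²B² = I` in `SL(2, ℂ)` and `tr(AB) = ±2`, then the pair
`(A, B)` is reducible. -/
theorem klein_trace_pm_two_reducible
    (A B : Matrix.SpecialLinearGroup (Fin 2) ℂ)
    (hrel : A ^ 2 * B ^ 2 = 1) (htr : tr (A * B) = 2 ∨ tr (A * B) = -2) :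
    SharesEigenvector A B :=
  klein_trace_pm_two_reducible_general A B hrel htr
end

section
/- Let G be a group and let ρ₁, ρ₂ : G → SL(2,ℂ) be group homomorphisms with equal characters, i.e., tr(ρ₁(g)) = tr(ρ₂(g)) for all g ∈ G. If ρ₁ is irreducible, meaning there is no nonzero vector v ∈ ℂ² such that ρ₁(g)·v ∈ ℂ·v for all g ∈ G, then ρ₁ and ρ₂ are conjugate: there exists an invertible 2×2 complex matrix P with ρ₂(g) = P·ρ₁(g)·P⁻¹ for all g ∈ G. -/
open Matrix

/-- A homomorphism `ρ : G → SL(2, ℂ)` is irreducible if no line in `ℂ²`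
is invariant under every `ρ(g)`. -/
def IsIrreducibleRep {G : Type*} [Group G]
    (ρ : G →* Matrix.SpecialLinearGroup (Fin 2) ℂ) : Prop :=
  ¬ ∃ v : Fin 2 → ℂ, v ≠ 0 ∧
      ∀ g : G, ∃ c : ℂ, ((ρ g : Matrix (Fin 2) (Fin 2) ℂ)).mulVec v = c • v

/-!
If `ρ₁` is irreducible, then `k[G] → End V₁` is surjective by Burnside's theorem. Equality of the
characters extends linearly to `k[G]`, so every `a` in the kernel of `ρ₂` satisfies
`tr (ρ₁ a * ρ₁ b) = tr (ρ₂ (a * b)) = 0` for all `b`; hence `ρ₁ a = 0`, because the trace form on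
`End V₁` is nondegenerate. So `ρ₁` factors through the image of `ρ₂`, and as `End V₁` and `End V₂`
have the same dimension, this gives an algebra isomorphism `End V₁ ≃ End V₂` carrying `ρ₁` to `ρ₂`.
By Skolem–Noether it is conjugation by a linear isomorphism `V₁ ≃ V₂`.
-/

open Module

section TraceForm

variable {R A V W : Type*} [CommRing R] [Ring A] [Algebra R A]
  [AddCommGroup V] [Module R V] [Module.Free R V] [Module.Finite R V] [AddCommGroup W] [Module R W]

theorem end_eq_zero_of_forall_trace_mul_eq_zero {f : End R V}
    (h : ∀ g : End R V, LinearMap.trace R V (f * g) = 0) : f = 0 := by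
  ext v
  refine (forall_dual_apply_eq_zero_iff R (f v)).mp fun ℓ => ?_
  have f_mul_rankOne : f * ℓ.smulRight v = ℓ.smulRight (f v) := by ext; simp
  rw [← LinearMap.trace_smulRight, ← f_mul_rankOne, h]

theorem ker_le_ker_of_trace_eq {φ : A →ₐ[R] End R V} {ψ : A →ₐ[R] End R W}
    (hφ : Function.Surjective φ)
    (htr : ∀ a, LinearMap.trace R V (φ a) = LinearMap.trace R W (ψ a)) :
    RingHom.ker ψ ≤ RingHom.ker φ := by
  intro a ha
  rw [RingHom.mem_ker] at ha ⊢
  refine end_eq_zero_of_forall_trace_mul_eq_zero fun g => ?_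
  obtain ⟨b, rfl⟩ := hφ g
  rw [← map_mul, htr, map_mul, ha, zero_mul, map_zero]

end TraceForm

section Field

theorem exists_linearMap_comp_eq_of_ker_le_ker {K M N P : Type*} [DivisionRing K]
    [AddCommGroup M] [Module K M] [AddCommGroup N] [Module K N] [AddCommGroup P] [Module K P]
    {f : M →ₗ[K] N} {g : M →ₗ[K] P} (h : LinearMap.ker g ≤ LinearMap.ker f) :
    ∃ l : P →ₗ[K] N, l ∘ₗ g = f := by
  obtain ⟨l, hl⟩ :=
    ((LinearMap.ker g).liftQ f h ∘ₗ g.quotKerEquivRange.symm.toLinearMap).exists_extend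
  refine ⟨l, LinearMap.ext fun x => ?_⟩
  simpa [g.quotKerEquivRange_symm_apply_image x ⟨x, rfl⟩] using
    LinearMap.congr_fun hl ⟨g x, x, rfl⟩

variable {k : Type*} [Field k]

theorem exists_algEquiv_apply_eq_of_ker_le_ker {A B C : Type*} [Ring A] [Algebra k A]
    [Ring B] [Algebra k B] [Ring C] [Algebra k C] [FiniteDimensional k C]
    {φ : A →ₐ[k] B} {ψ : A →ₐ[k] C} (hφ : Function.Surjective φ)
    (hker : RingHom.ker ψ ≤ RingHom.ker φ) (hdim : finrank k C = finrank k B) :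
    ∃ e : B ≃ₐ[k] C, ∀ a, e (φ a) = ψ a := by
  obtain ⟨l, hl⟩ := exists_linearMap_comp_eq_of_ker_le_ker
    (f := φ.toLinearMap) (g := ψ.toLinearMap) hker
  replace hl : ∀ a, l (ψ a) = φ a := LinearMap.congr_fun hl
  have l_surj : Function.Surjective l := fun b => (hφ b).imp' ψ fun a ha => (hl a).trans ha
  have : FiniteDimensional k B := .of_surjective l l_surj
  have l_inj : Function.Injective l :=
    (LinearMap.injective_iff_surjective_of_finrank_eq_finrank hdim).mpr l_surj
  have ψ_surj : Function.Surjective ψ := fun c =>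
    (hφ (l c)).imp fun a ha => l_inj ((hl a).trans ha)
  have l_one : l 1 = 1 := by simpa using hl 1
  have l_mul : ∀ x y, l (x * y) = l x * l y := ψ_surj.forall₂.mpr fun a b => by
    rw [← map_mul, hl, hl, hl, map_mul]
  refine ⟨(AlgEquiv.ofBijective (AlgHom.ofLinearMap l l_one l_mul) ⟨l_inj, l_surj⟩).symm,
    fun a => ?_⟩
  rw [AlgEquiv.symm_apply_eq]
  exact (hl a).symm

variable {A V W : Type*} [Ring A] [Algebra k A] [AddCommGroup V] [Module k V]
  [FiniteDimensional k V] [AddCommGroup W] [Module k W] [FiniteDimensional k W]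

theorem exists_conjAlgEquiv_apply_eq_of_trace_eq {φ : A →ₐ[k] End k V} {ψ : A →ₐ[k] End k W}
    (hφ : Function.Surjective φ) (hdim : finrank k W = finrank k V)
    (htr : ∀ a, LinearMap.trace k V (φ a) = LinearMap.trace k W (ψ a)) :
    ∃ T : V ≃ₗ[k] W, ∀ a, T.conjAlgEquiv k (φ a) = ψ a := by
  have finrank_end_eq : finrank k (End k W) = finrank k (End k V) := by
    simp only [finrank_linearMap, hdim]
  obtain ⟨e, he⟩ :=
    exists_algEquiv_apply_eq_of_ker_le_ker hφ (ker_le_ker_of_trace_eq hφ htr) finrank_end_eq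
  obtain ⟨T, rfl⟩ := e.eq_linearEquivConjAlgEquiv
  exact ⟨T, he⟩

theorem lsmul_surjective_of_isSimpleModule [IsAlgClosed k] [Module A V] [IsScalarTower k A V]
    [IsSimpleModule A V] : Function.Surjective (Algebra.lsmul k k V : A →ₐ[k] End k V) := by
  -- By Schur's lemma `End A V = k`, so every `f` lies in the bicommutant of `A`, which is the image
  -- of `A` by the density theorem.
  have : Module.Finite (End A V) V := .of_restrictScalars_finite k _ _
  intro f
  have f_commutes (s : End A V) (v : V) : f (s • v) = s • f v := by
    obtain ⟨c, rfl⟩ := (IsSimpleModule.algebraMap_end_bijective_of_isAlgClosed k).2 s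
    simp
  obtain ⟨a, ha⟩ := Module.Finite.toModuleEnd_moduleEnd_surjective (R := A) (M := V)
    { f with map_smul' := f_commutes }
  exact ⟨a, LinearMap.ext fun v => LinearMap.congr_fun ha v⟩

end Field

section Representation

variable {k G V W : Type*} [Field k] [Monoid G] [AddCommGroup V] [Module k V]
  [AddCommGroup W] [Module k W] {ρ : Representation k G V} {σ : Representation k G W}

theorem trace_asAlgebraHom_eq_of_character_eq (h : ρ.character = σ.character)
    (a : MonoidAlgebra k G) :
    LinearMap.trace k V (ρ.asAlgebraHom a) = LinearMap.trace k W (σ.asAlgebraHom a) := by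
  induction a using MonoidAlgebra.induction_on with
  | of g => simpa only [Representation.asAlgebraHom_of] using! congrFun h g
  | add a b ha hb => simp only [map_add, ha, hb]
  | smul r a ha => simp only [map_smul, ha]

theorem asAlgebraHom_surjective_of_isIrreducible [IsAlgClosed k] [FiniteDimensional k V]
    [ρ.IsIrreducible] : Function.Surjective ρ.asAlgebraHom := by
  have lsmul_surj : Function.Surjective
      (Algebra.lsmul k k ρ.asModule : MonoidAlgebra k G →ₐ[k] End k ρ.asModule) :=
    lsmul_surjective_of_isSimpleModule
  exact lsmul_surj

theorem nonempty_equiv_of_character_eq [IsAlgClosed k] [FiniteDimensional k V]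
    [FiniteDimensional k W] [ρ.IsIrreducible] (hdim : finrank k W = finrank k V)
    (hchar : ρ.character = σ.character) : Nonempty (ρ.Equiv σ) := by
  obtain ⟨T, hT⟩ := exists_conjAlgEquiv_apply_eq_of_trace_eq
    asAlgebraHom_surjective_of_isIrreducible hdim (trace_asAlgebraHom_eq_of_character_eq hchar)
  refine ⟨.mk T fun g => LinearMap.ext fun v => ?_⟩
  simpa using LinearMap.congr_fun (hT (MonoidAlgebra.of k G g)) (T v)

theorem isIrreducible_of_finrank_eq_two (hdim : finrank k V = 2)
    (h : ¬ ∃ v : V, v ≠ 0 ∧ ∀ g, ∃ c : k, ρ g v = c • v) : ρ.IsIrreducible := by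
  have : FiniteDimensional k V := .of_finrank_pos (by lia)
  have : Nontrivial V := nontrivial_of_finrank_pos (R := k) (by lia)
  have bot_ne_top : (⊥ : Subrepresentation ρ) ≠ ⊤ := fun h =>
    bot_ne_top (α := Submodule k V) (congrArg Subrepresentation.toSubmodule h)
  refine { toNontrivial := ⟨⊥, ⊤, bot_ne_top⟩, eq_bot_or_eq_top := fun N => ?_ }
  by_contra! hN
  have N_ne_bot : N.toSubmodule ≠ ⊥ := fun hbot =>
    hN.1 (Subrepresentation.toSubmodule_injective hbot)
  have N_ne_top : N.toSubmodule ≠ ⊤ := fun htop =>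
    hN.2 (Subrepresentation.toSubmodule_injective htop)
  have finrank_N : finrank k N.toSubmodule = 1 := by
    have finrank_N_lt := Submodule.finrank_lt N_ne_top
    have one_le_finrank_N := Submodule.one_le_finrank_iff.mpr N_ne_bot
    lia
  obtain ⟨v, v_ne_zero, hv⟩ := finrank_eq_one_iff'.mp finrank_N
  refine h ⟨v, by simpa using v_ne_zero, fun g => ?_⟩
  obtain ⟨c, hc⟩ := hv ⟨ρ g v, N.apply_mem_toSubmodule g v.2⟩
  exact ⟨c, congrArg Subtype.val hc.symm⟩

end Representation

section Matrix

variable {R k G n : Type*} [CommRing R] [Field k] [Monoid G] [Fintype n] [DecidableEq n]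

/-- The representation on column vectors `n → R` attached to a matrix representation `ρ`: the
element `g` acts as `v ↦ ρ g *ᵥ v`. It gives access to the notions Mathlib defines for
`Representation`, such as irreducibility and characters. -/
def matrixRepresentation (ρ : G →* Matrix n n R) : Representation R G (n → R) :=
  (toLinAlgEquiv' : Matrix n n R ≃ₐ[R] End R (n → R)).toMulEquiv.toMonoidHom.comp ρ

theorem matrixRepresentation_apply (ρ : G →* Matrix n n R) (g : G) :
    matrixRepresentation ρ g = toLin' (ρ g) := rfl

theorem character_matrixRepresentation (ρ : G →* Matrix n n k) (g : G) :
    (matrixRepresentation ρ).character g = trace (ρ g) :=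
  trace_toLin'_eq (ρ g)

theorem exists_isUnit_conj_of_equiv {ρ₁ ρ₂ : G →* Matrix n n R}
    (e : (matrixRepresentation ρ₁).Equiv (matrixRepresentation ρ₂)) :
    ∃ P : Matrix n n R, IsUnit P ∧ ∀ g, ρ₂ g = P * ρ₁ g * P⁻¹ := by
  set P := LinearMap.toMatrix' e.toLinearMap
  have isUnit_P : IsUnit P :=
    LinearMap.isUnit_toMatrix'_iff.mpr ((End.isUnit_iff _).mpr e.toLinearEquiv.bijective)
  refine ⟨P, isUnit_P, fun g => ?_⟩
  have intertwines : P * ρ₁ g = ρ₂ g * P := by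
    simpa only [matrixRepresentation_apply, LinearMap.toMatrix'_comp,
      LinearMap.toMatrix'_toLin'] using congrArg LinearMap.toMatrix' (e.isIntertwining' g)
  rw [intertwines, mul_nonsing_inv_cancel_right _ _ ((isUnit_iff_isUnit_det P).mp isUnit_P)]

theorem irreducible_rep_conj_of_eq_character_general [IsAlgClosed k]
    (ρ₁ ρ₂ : G →* Matrix n n k) (htr : ∀ g, trace (ρ₁ g) = trace (ρ₂ g))
    (hirr : (matrixRepresentation ρ₁).IsIrreducible) :
    ∃ P : Matrix n n k, IsUnit P ∧ ∀ g, ρ₂ g = P * ρ₁ g * P⁻¹ := by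
  have character_eq :
      (matrixRepresentation ρ₁).character = (matrixRepresentation ρ₂).character :=
    funext fun g => by simpa only [character_matrixRepresentation] using htr g
  obtain ⟨e⟩ := nonempty_equiv_of_character_eq rfl character_eq
  exact exists_isUnit_conj_of_equiv e

end Matrix

theorem IsIrreducibleRep.isIrreducible_matrixRepresentation {G : Type*} [Group G]
    {ρ : G →* SpecialLinearGroup (Fin 2) ℂ} (h : IsIrreducibleRep ρ) :
    (matrixRepresentation (SpecialLinearGroup.coeMonoidHom.comp ρ)).IsIrreducible :=
  isIrreducible_of_finrank_eq_two (by simp) h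

/-- An irreducible `SL(2, ℂ)`-representation is determined up to conjugacy
by its character: if `ρ₁` is irreducible and `tr(ρ₁(g)) = tr(ρ₂(g))` for all
`g`, then `ρ₂` is conjugate to `ρ₁`. -/
theorem irreducible_rep_conj_of_eq_character {G : Type*} [Group G]
    (ρ₁ ρ₂ : G →* Matrix.SpecialLinearGroup (Fin 2) ℂ)
    (htr : ∀ g : G, Matrix.trace (ρ₁ g : Matrix (Fin 2) (Fin 2) ℂ) =
      Matrix.trace (ρ₂ g : Matrix (Fin 2) (Fin 2) ℂ))
    (hirr : IsIrreducibleRep ρ₁) :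
    ∃ P : Matrix (Fin 2) (Fin 2) ℂ, IsUnit P ∧
      ∀ g : G, (ρ₂ g : Matrix (Fin 2) (Fin 2) ℂ) =
        P * (ρ₁ g : Matrix (Fin 2) (Fin 2) ℂ) * P⁻¹ :=
  irreducible_rep_conj_of_eq_character_general (SpecialLinearGroup.coeMonoidHom.comp ρ₁)
    (SpecialLinearGroup.coeMonoidHom.comp ρ₂) htr hirr.isIrreducible_matrixRepresentation
end
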